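/- arXiv:2503.03448 — 2 statements merged into one kernel-verified Lean document; each statement's English description precedes it below -/
import Mathlib

section
/- Let d₀ := (log(11 + √105) − log 2)/log 3. Then for every real number p ≥ 4, the series R_p := ∑_{k=1}^{∞} (p−1)^{1−d₀k} (2k+1)^{2−4/p} converges and R_p ≤ 1, with equality R_4 = 1 at p = 4. -/
/-- The constant `d₀ = (log(11 + √105) − log 2)/log 3`. -/
noncomputable def d₀ : ℝ := (Real.log (11 + Real.sqrt 105) - Real.log 2) / Real.log 3

/-!
For each `k` the summand is an antitone function of `p > 1`, so every `R_p` with `p ≥ 4` is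
dominated termwise by `R_4`. Indeed, with `L = log (2k + 1)`, the logarithm of the summand is
`2L - (d₀ k - 1 - L) log (p - 1) - L (log (p - 1) + 4 / p)`; here `0 ≤ L ≤ d₀ k - 1`, and
`log (p - 1) + 4 / p` is monotone since its derivative is `(p - 2)² / (p² (p - 1))`.

At `p = 4` the exponent `2 - 4 / p` is `1`, so with `x = 3 ^ (-d₀)` the series is
`3 ∑ (2k + 1) x ^ k = 3 x (3 - x) / (1 - x)²`. This equals `1` exactly when `4 x² - 11 x + 1 = 0`,
whose root in `(0, 1)` is `(11 - √105) / 8`: this is where `d₀` comes from.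
-/

open Real Set

/-- The `k`-th summand of the series `R_p`, with a general constant `d` in place of `d₀` and
indexed from `k = 0`, so that the paper's `k` is `k + 1` here. -/
noncomputable def rTerm (d p : ℝ) (k : ℕ) : ℝ :=
  (p - 1) ^ (1 - d * ((k : ℝ) + 1)) * (2 * ((k : ℝ) + 1) + 1) ^ (2 - 4 / p)

lemma monotoneOn_log_sub_one_add_four_div :
    MonotoneOn (fun p : ℝ => log (p - 1) + 4 / p) (Ioi 1) := by
  have hderiv : ∀ p ∈ Ioi (1 : ℝ),
      HasDerivAt (fun p : ℝ => log (p - 1) + 4 / p) ((p - 2) ^ 2 / (p ^ 2 * (p - 1))) p := by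
    intro p (hp : 1 < p)
    have hp0 : p ≠ 0 := by linarith
    have hp1 : p - 1 ≠ 0 := by linarith
    convert! (((hasDerivAt_id p).sub_const 1).log hp1).add
      ((hasDerivAt_const p (4 : ℝ)).div (hasDerivAt_id p) hp0) using 1
    simp only [id_eq]
    field_simp
    ring
  refine monotoneOn_of_hasDerivWithinAt_nonneg (convex_Ioi 1)
    (fun p hp => (hderiv p hp).continuousAt.continuousWithinAt)
    (fun p hp => (hderiv p (interior_subset hp)).hasDerivWithinAt) fun p hp => ?_
  have hp1 : 0 < p - 1 := sub_pos.2 (interior_subset hp)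
  positivity

lemma antitoneOn_sub_one_rpow_mul_rpow {m e : ℝ} (hm : 1 ≤ m) (he : log m ≤ e) :
    AntitoneOn (fun p : ℝ => (p - 1) ^ (-e) * m ^ (2 - 4 / p)) (Ioi 1) := by
  intro q hq p hp hqp
  have hq1 : 0 < q - 1 := sub_pos.2 hq
  have hp1 : 0 < p - 1 := sub_pos.2 hp
  have hm0 : 0 < m := by linarith
  simp only [rpow_def_of_pos hq1, rpow_def_of_pos hp1, rpow_def_of_pos hm0, ← exp_add]
  have hlog : (e - log m) * log (q - 1) ≤ (e - log m) * log (p - 1) :=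
    mul_le_mul_of_nonneg_left (log_le_log hq1 (by linarith)) (sub_nonneg.2 he)
  have hadd : log m * (log (q - 1) + 4 / q) ≤ log m * (log (p - 1) + 4 / p) :=
    mul_le_mul_of_nonneg_left (monotoneOn_log_sub_one_add_four_div hq hp hqp) (log_nonneg hm)
  exact exp_le_exp.2 (by linarith)

lemma log_two_mul_add_one_le {d t : ℝ} (hd : 1 + log 3 ≤ d) (ht : 1 ≤ t) :
    log (2 * t + 1) ≤ d * t - 1 := by
  have hlog3 : 0 ≤ log 3 := log_nonneg (by norm_num)
  calc
    log (2 * t + 1) = log 3 + log ((2 * t + 1) / 3) := by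
      rw [← log_mul (by norm_num) (by positivity)]
      congr 1
      ring
    _ ≤ log 3 + ((2 * t + 1) / 3 - 1) := by
      gcongr
      exact log_le_sub_one_of_pos (by positivity)
    _ ≤ d * t - 1 := by nlinarith

lemma antitoneOn_rTerm {d : ℝ} (hd : 1 + log 3 ≤ d) (k : ℕ) :
    AntitoneOn (fun p => rTerm d p k) (Ioi 1) := by
  have hk : (1 : ℝ) ≤ k + 1 := by simp
  simpa only [rTerm, neg_sub] using
    antitoneOn_sub_one_rpow_mul_rpow (by linarith) (log_two_mul_add_one_le hd hk)

lemma rTerm_nonneg {p : ℝ} (hp : 1 ≤ p) (d : ℝ) (k : ℕ) : 0 ≤ rTerm d p k := by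
  have : 0 ≤ p - 1 := sub_nonneg.2 hp
  unfold rTerm
  positivity

lemma hasSum_two_mul_add_one_mul_geometric {𝕜 : Type*} [NormedField 𝕜]
    {x : 𝕜} (hx : ‖x‖ < 1) :
    HasSum (fun k : ℕ => (2 * ((k : 𝕜) + 1) + 1) * x ^ (k + 1))
      (x * (3 - x) / (1 - x) ^ 2) := by
  have hx1 : 1 - x ≠ 0 := by
    rw [sub_ne_zero]
    rintro rfl
    simp at hx
  convert! ((hasSum_coe_mul_geometric_of_norm_lt_one hx).mul_left (2 * x)).add
    ((hasSum_geometric_of_norm_lt_one hx).mul_left (3 * x)) using 1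
  · ext k
    ring
  · field_simp
    ring

lemma rTerm_four (d : ℝ) (k : ℕ) :
    rTerm d 4 k = 3 * ((2 * ((k : ℝ) + 1) + 1) * (3 ^ (-d)) ^ (k + 1)) := by
  have hpow : (3 : ℝ) ^ (1 - d * ((k : ℝ) + 1)) = 3 * (3 ^ (-d)) ^ (k + 1) := by
    rw [← rpow_mul_natCast (by norm_num), sub_eq_add_neg, rpow_add (by norm_num), rpow_one,
      neg_mul, Nat.cast_add_one]
  have hbase : (4 : ℝ) - 1 = 3 := by norm_num
  have hexp : (2 : ℝ) - 4 / 4 = 1 := by norm_num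
  rw [rTerm, hbase, hexp, hpow, rpow_one]
  ring

lemma hasSum_rTerm_four {d : ℝ} (hd : 0 < d) :
    HasSum (rTerm d 4) (3 * (3 ^ (-d) * (3 - 3 ^ (-d)) / (1 - 3 ^ (-d)) ^ 2)) := by
  have hnorm : ‖(3 : ℝ) ^ (-d)‖ < 1 := by
    rw [norm_of_nonneg (by positivity)]
    exact rpow_lt_one_of_one_lt_of_neg (by norm_num) (neg_neg_of_pos hd)
  rw [funext (rTerm_four d)]
  exact (hasSum_two_mul_add_one_mul_geometric hnorm).mul_left 3

lemma d₀_eq_logb : d₀ = logb 3 ((11 + √105) / 2) := by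
  rw [d₀, logb, log_div (by positivity) (by norm_num)]

lemma three_rpow_neg_d₀ : (3 : ℝ) ^ (-d₀) = (11 - √105) / 8 := by
  have hsq : √105 ^ 2 = 105 := sq_sqrt (by norm_num)
  rw [rpow_neg (by norm_num), d₀_eq_logb,
    rpow_logb (by norm_num) (by norm_num) (by positivity)]
  exact inv_eq_of_mul_eq_one_right (by linear_combination -hsq / 16)

lemma one_add_log_three_le_d₀ : 1 + log 3 ≤ d₀ := by
  have hsqrt : (10.2 : ℝ) ≤ √105 := le_sqrt_of_sq_le (by norm_num)
  have hpow : 2.1 * log 3 ≤ log 10.6 := by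
    have h := log_le_log (by norm_num) (show (3 : ℝ) ^ 21 ≤ 10.6 ^ 10 by norm_num)
    rw [log_pow, log_pow] at h
    push_cast at h
    linarith
  calc
    1 + log 3 ≤ 2.1 := by linarith [log_three_lt_d9]
    _ ≤ logb 3 10.6 := (le_div_iff₀ (log_pos (by norm_num))).2 hpow
    _ ≤ logb 3 ((11 + √105) / 2) :=
      logb_le_logb_of_le (by norm_num) (by norm_num) (by linarith)
    _ = d₀ := d₀_eq_logb.symm

lemma hasSum_rTerm_d₀_four : HasSum (rTerm d₀ 4) 1 := by
  have hd : 0 < d₀ := by linarith [one_add_log_three_le_d₀, log_pos (show (1 : ℝ) < 3 by norm_num)]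
  have hsq : √105 ^ 2 = 105 := sq_sqrt (by norm_num)
  have hne : 1 - (11 - √105) / 8 ≠ 0 := fun h => by nlinarith
  convert hasSum_rTerm_four hd using 1
  rw [three_rpow_neg_d₀, ← mul_div_assoc, eq_div_iff (pow_ne_zero 2 hne)]
  linear_combination hsq / 16

/-- For every real `p ≥ 4`, the series `R_p = ∑_{k=1}^∞ (p−1)^{1−d₀k} (2k+1)^{2−4/p}`
converges and satisfies `R_p ≤ 1`, with equality `R_4 = 1` at `p = 4`. -/
theorem R_p_le_one :
    (∀ p : ℝ, 4 ≤ p →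
      Summable (fun k : ℕ =>
        (p - 1) ^ (1 - d₀ * ((k : ℝ) + 1)) * (2 * ((k : ℝ) + 1) + 1) ^ (2 - 4 / p)) ∧
      (∑' k : ℕ,
        (p - 1) ^ (1 - d₀ * ((k : ℝ) + 1)) * (2 * ((k : ℝ) + 1) + 1) ^ (2 - 4 / p)) ≤ 1) ∧
    (∑' k : ℕ,
      ((4 : ℝ) - 1) ^ (1 - d₀ * ((k : ℝ) + 1)) *
        (2 * ((k : ℝ) + 1) + 1) ^ (2 - 4 / (4 : ℝ))) = 1 := by
  refine ⟨fun p hp => ?_, hasSum_rTerm_d₀_four.tsum_eq⟩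
  have hle (k : ℕ) : rTerm d₀ p k ≤ rTerm d₀ 4 k :=
    antitoneOn_rTerm one_add_log_three_le_d₀ k (mem_Ioi.2 (by norm_num))
      (mem_Ioi.2 (by linarith)) hp
  have hsummable : Summable (rTerm d₀ p) :=
    hasSum_rTerm_d₀_four.summable.of_nonneg_of_le (rTerm_nonneg (by linarith) d₀) hle
  exact ⟨hsummable, hasSum_le hle hsummable.hasSum hasSum_rTerm_d₀_four⟩
end

section
/- Let n ≥ 5 be a real number, and define c_k := S_{2k}'(√n)/(2√n · S_{2k}(√n)) for integers k ≥ 1 and c_0 := 0. Then for a real number s, sup_{t > 0} { t^s · ∑_{k=0}^{∞} (1+k)² e^{−2t(1+c_k)} } < ∞ if and only if s ≥ 3. (This is the analytic core of the sharpness of the Sobolev embedding / Hardy–Littlewood–Sobolev inequality for Aut⁺(B) with dim B = n.) -/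
open Polynomial

/-- The (dilated) Chebyshev polynomials of the second kind:
`S 0 = 1`, `S 1 = X`, `S (k+2) = X * S (k+1) - S k`. -/
noncomputable def S : ℕ → Polynomial ℝ
  | 0 => 1
  | 1 => Polynomial.X
  | (k + 2) => Polynomial.X * S (k + 1) - S k

/-- The eigenvalue sequence `c_k = S_{2k}'(√n)/(2√n · S_{2k}(√n))` for `k ≥ 1`, with `c_0 = 0`. -/
noncomputable def heatEigenvalue (n : ℝ) (k : ℕ) : ℝ :=
  if k = 0 then 0
  else (S (2 * k)).derivative.eval (Real.sqrt n) /
    (2 * Real.sqrt n * (S (2 * k)).eval (Real.sqrt n))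

/-!
`S k` has degree `k` and all its roots `2 cos (jπ / (k + 1))` lie in `[-2, 2]`, so for `x > 2` its
logarithmic derivative `∑ⱼ 1 / (x - zⱼ)` lies between `k / (x + 2)` and `k / (x - 2)`. Hence `c_k`
grows linearly in `k`. Up to a rescaling of `t`, the sum is therefore comparable to
`∑ₖ (1 + k)² exp (-t (1 + k))`, which is of order `t⁻³` as `t → 0` and decays exponentially as
`t → ∞`.
-/

section LogDerivative

variable {K : Type*} [Field K] [LinearOrder K] {p : K[X]} {a b x : K}

lemma eval_ne_zero_of_roots_le (hp : p ≠ 0) (hb : ∀ z ∈ p.roots, z ≤ b) (hx : b < x) :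
    p.eval x ≠ 0 :=
  fun h ↦ (hb x ((mem_roots hp).2 h)).not_gt hx

variable [IsStrictOrderedRing K]

lemma eval_derivative_div_eval_le (hp : p ≠ 0) (hs : p.Splits) (hb : ∀ z ∈ p.roots, z ≤ b)
    (hx : b < x) : p.derivative.eval x / p.eval x ≤ p.natDegree / (x - b) := by
  rw [hs.eval_derivative_div_eval_of_ne_zero (eval_ne_zero_of_roots_le hp hb hx),
    hs.natDegree_eq_card_roots, ← p.roots.card_map fun z ↦ 1 / (x - z), div_eq_mul_one_div,
    ← nsmul_eq_mul]
  refine Multiset.sum_le_card_nsmul _ _ fun y hy ↦ ?_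
  obtain ⟨z, hz, rfl⟩ := Multiset.mem_map.1 hy
  exact one_div_le_one_div_of_le (sub_pos.2 hx) (sub_le_sub_left (hb z hz) x)

lemma le_eval_derivative_div_eval (hp : p ≠ 0) (hs : p.Splits) (ha : ∀ z ∈ p.roots, a ≤ z)
    (hb : ∀ z ∈ p.roots, z ≤ b) (hx : b < x) :
    p.natDegree / (x - a) ≤ p.derivative.eval x / p.eval x := by
  rw [hs.eval_derivative_div_eval_of_ne_zero (eval_ne_zero_of_roots_le hp hb hx),
    hs.natDegree_eq_card_roots, ← p.roots.card_map fun z ↦ 1 / (x - z), div_eq_mul_one_div,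
    ← nsmul_eq_mul]
  refine Multiset.card_nsmul_le_sum fun y hy ↦ ?_
  obtain ⟨z, hz, rfl⟩ := Multiset.mem_map.1 hy
  exact one_div_le_one_div_of_le (sub_pos.2 ((hb z hz).trans_lt hx)) (sub_le_sub_left (ha z hz) x)

end LogDerivative

section Chebyshev

lemma S_eq_chebyshev_S : ∀ k : ℕ, S k = Polynomial.Chebyshev.S ℝ k
  | 0 => by simp [S]
  | 1 => by simp [S]
  | k + 2 => by
    rw [S, S_eq_chebyshev_S (k + 1), S_eq_chebyshev_S k]
    exact_mod_cast (Polynomial.Chebyshev.S_add_two ℝ k).symm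

lemma S_eq_U_comp (k : ℕ) : S k = (Polynomial.Chebyshev.U ℝ k).comp (C ⅟2 * X) := by
  rw [S_eq_chebyshev_S, Polynomial.Chebyshev.S_eq_U_comp_half_mul_X]

lemma natDegree_S (k : ℕ) : (S k).natDegree = k := by
  rw [S_eq_U_comp, natDegree_comp, Polynomial.Chebyshev.natDegree_U_natCast,
    natDegree_C_mul_X _ (by simp), mul_one]

lemma S_ne_zero (k : ℕ) : S k ≠ 0 := by
  rcases k.eq_zero_or_pos with rfl | hk
  · simp [S]
  · exact ne_zero_of_natDegree_gt (n := 0) (by rwa [natDegree_S])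

lemma splits_chebyshev_U (k : ℕ) : (Polynomial.Chebyshev.U ℝ k).Splits := by
  rw [splits_iff_card_roots, Polynomial.Chebyshev.roots_U_real, Finset.image_val,
    Finset.range_val, Multiset.dedup_eq_self.2 (Polynomial.Chebyshev.roots_U_real_nodup k),
    Multiset.card_map, Multiset.card_range, Polynomial.Chebyshev.natDegree_U_natCast]

lemma abs_le_one_of_mem_roots_chebyshev_U {k : ℕ} {z : ℝ}
    (hz : z ∈ (Polynomial.Chebyshev.U ℝ k).roots) : |z| ≤ 1 := by
  rw [Polynomial.Chebyshev.roots_U_real, Finset.mem_val, Finset.mem_image] at hz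
  obtain ⟨j, -, rfl⟩ := hz
  exact Real.abs_cos_le_one _

lemma splits_S (k : ℕ) : (S k).Splits := by
  rw [S_eq_U_comp]
  exact (splits_chebyshev_U k).comp_of_natDegree_le_one (natDegree_C_mul_X _ (by simp)).le

lemma abs_le_two_of_mem_roots_S {k : ℕ} {z : ℝ} (hz : z ∈ (S k).roots) : |z| ≤ 2 := by
  have hU : ⅟2 * z ∈ (Polynomial.Chebyshev.U ℝ k).roots := by
    have hroot := isRoot_of_mem_roots hz
    rw [S_eq_U_comp, IsRoot, eval_comp, eval_C_mul, eval_X] at hroot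
    exact (mem_roots (Polynomial.Chebyshev.U_ne_zero ℝ k (by lia))).2 hroot
  have h := abs_le_one_of_mem_roots_chebyshev_U hU
  rw [invOf_eq_inv, abs_mul, abs_of_pos (by norm_num)] at h
  linarith

lemma div_le_derivative_S_div_S {x : ℝ} (hx : 2 < x) (k : ℕ) :
    k / (x + 2) ≤ (S k).derivative.eval x / (S k).eval x := by
  have h := le_eval_derivative_div_eval (S_ne_zero k) (splits_S k)
    (fun z hz ↦ (abs_le.1 (abs_le_two_of_mem_roots_S hz)).1)
    (fun z hz ↦ (abs_le.1 (abs_le_two_of_mem_roots_S hz)).2) hx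
  rwa [natDegree_S, sub_neg_eq_add] at h

lemma derivative_S_div_S_le_div {x : ℝ} (hx : 2 < x) (k : ℕ) :
    (S k).derivative.eval x / (S k).eval x ≤ k / (x - 2) := by
  have h := eval_derivative_div_eval_le (S_ne_zero k) (splits_S k)
    (fun z hz ↦ (abs_le.1 (abs_le_two_of_mem_roots_S hz)).2) hx
  rwa [natDegree_S] at h

lemma heatEigenvalue_eq (n : ℝ) (k : ℕ) :
    heatEigenvalue n k = (S (2 * k)).derivative.eval √n / (S (2 * k)).eval √n / (2 * √n) := by
  rcases eq_or_ne k 0 with rfl | hk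
  · simp [heatEigenvalue, S]
  · rw [heatEigenvalue, if_neg hk, div_div, mul_comm (2 * √n)]

lemma div_le_heatEigenvalue {n : ℝ} (hn : 4 < n) (k : ℕ) :
    k / (√n * (√n + 2)) ≤ heatEigenvalue n k := by
  have hx : 2 < √n := Real.lt_sqrt_of_sq_lt (by linarith)
  have h := div_le_derivative_S_div_S hx (2 * k)
  calc k / (√n * (√n + 2)) = (2 * k : ℕ) / (√n + 2) / (2 * √n) := by
        push_cast
        field_simp
    _ ≤ heatEigenvalue n k := by
        rw [heatEigenvalue_eq]
        exact div_le_div_of_nonneg_right h (by positivity)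

lemma heatEigenvalue_le_div {n : ℝ} (hn : 4 < n) (k : ℕ) :
    heatEigenvalue n k ≤ k / (√n * (√n - 2)) := by
  have hx : 2 < √n := Real.lt_sqrt_of_sq_lt (by linarith)
  have h := derivative_S_div_S_le_div hx (2 * k)
  calc heatEigenvalue n k ≤ (2 * k : ℕ) / (√n - 2) / (2 * √n) := by
        rw [heatEigenvalue_eq]
        exact div_le_div_of_nonneg_right h (by positivity)
    _ = k / (√n * (√n - 2)) := by
        push_cast
        field_simp [sub_ne_zero.2 hx.ne']

end Chebyshev

section HeatTrace

/-- The heat trace `∑ₖ mₖ exp (-t λₖ)` of an operator with eigenvalues `λₖ = ev k` of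
multiplicities `mₖ = (1 + k) ^ d`. The multiplicities only enter as weights, so the exponent
`d` is allowed to be any real number. -/
noncomputable def heatTrace (d : ℝ) (ev : ℕ → ℝ) (t : ℝ) : ℝ :=
  ∑' k : ℕ, (1 + (k : ℝ)) ^ d * Real.exp (-(t * ev k))

lemma rpow_mul_exp_neg_mul_le {p a x : ℝ} (hp : 0 ≤ p) (ha : 0 < a) (hx : 0 ≤ x) :
    x ^ p * Real.exp (-(a * x)) ≤ (p / a) ^ p := by
  have h := ProbabilityTheory.rpow_abs_le_mul_exp_abs x hp ha.ne'
  rw [abs_of_nonneg hx, abs_of_pos ha] at h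
  rwa [Real.exp_neg, ← div_eq_mul_inv, div_le_iff₀ (Real.exp_pos _)]

lemma hasSum_exp_neg_mul_one_add {u : ℝ} (hu : 0 < u) :
    HasSum (fun k : ℕ ↦ Real.exp (-(u * (1 + k)))) (Real.exp u - 1)⁻¹ := by
  have hlt : Real.exp (-u) < 1 := Real.exp_lt_one_iff.2 (neg_lt_zero.2 hu)
  have h := (hasSum_geometric_of_lt_one (Real.exp_pos (-u)).le hlt).mul_left (Real.exp (-u))
  have hsum : Real.exp (-u) * (1 - Real.exp (-u))⁻¹ = (Real.exp u - 1)⁻¹ := by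
    rw [Real.exp_neg, ← mul_inv, mul_sub, mul_one, mul_inv_cancel₀ (Real.exp_ne_zero u)]
  rw [← hsum]
  refine h.congr_fun fun k ↦ ?_
  rw [← Real.exp_nat_mul, ← Real.exp_add]
  ring_nf

variable {d a b t : ℝ} {ev : ℕ → ℝ}

-- Half of the exponent absorbs the weight `(1 + k) ^ d`; the two remaining quarters provide the
-- decay in `t` and the summability in `k`.
lemma heatTrace_term_le (hd : 0 ≤ d) (ha : 0 < a) (hev : ∀ k : ℕ, a * (1 + k) ≤ ev k)
    (ht : 0 < t) (k : ℕ) :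
    (1 + (k : ℝ)) ^ d * Real.exp (-(t * ev k)) ≤
      (2 * d / (a * t)) ^ d * Real.exp (-(a * t / 4)) * Real.exp (-(a * t / 4 * (1 + k))) := by
  calc (1 + (k : ℝ)) ^ d * Real.exp (-(t * ev k))
      ≤ (1 + (k : ℝ)) ^ d * Real.exp (-(a * t / 2 * (1 + k)) + -(a * t / 4) +
          -(a * t / 4 * (1 + k))) := by
        have h1 := mul_le_mul_of_nonneg_left (hev k) ht.le
        have h2 : 0 ≤ a * t / 4 * k := by positivity
        gcongr
        linarith
    _ = (1 + (k : ℝ)) ^ d * Real.exp (-(a * t / 2 * (1 + k))) * Real.exp (-(a * t / 4)) *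
          Real.exp (-(a * t / 4 * (1 + k))) := by
        rw [Real.exp_add, Real.exp_add]
        ring
    _ ≤ (d / (a * t / 2)) ^ d * Real.exp (-(a * t / 4)) *
          Real.exp (-(a * t / 4 * (1 + k))) := by
        gcongr
        exact rpow_mul_exp_neg_mul_le hd (by positivity) (by positivity)
    _ = _ := by rw [div_div_eq_mul_div, mul_comm d]

lemma summable_heatTrace (hd : 0 ≤ d) (ha : 0 < a) (hev : ∀ k : ℕ, a * (1 + k) ≤ ev k)
    (ht : 0 < t) : Summable fun k : ℕ ↦ (1 + (k : ℝ)) ^ d * Real.exp (-(t * ev k)) :=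
  ((hasSum_exp_neg_mul_one_add (by positivity)).summable.mul_left _).of_nonneg_of_le
    (fun _ ↦ by positivity) (heatTrace_term_le hd ha hev ht)

lemma heatTrace_le (hd : 0 ≤ d) (ha : 0 < a) (hev : ∀ k : ℕ, a * (1 + k) ≤ ev k) (ht : 0 < t) :
    heatTrace d ev t ≤
      (2 * d / a) ^ d * (4 / a) * (t ^ (-(d + 1)) * Real.exp (-(a / 4 * t))) := by
  have hu : 0 < a * t / 4 := by positivity
  calc heatTrace d ev t
      ≤ (2 * d / (a * t)) ^ d * Real.exp (-(a * t / 4)) * (Real.exp (a * t / 4) - 1)⁻¹ :=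
        hasSum_le (heatTrace_term_le hd ha hev ht) (summable_heatTrace hd ha hev ht).hasSum
          ((hasSum_exp_neg_mul_one_add hu).mul_left _)
    _ ≤ (2 * d / (a * t)) ^ d * Real.exp (-(a * t / 4)) * (a * t / 4)⁻¹ := by
        gcongr
        linarith [Real.add_one_le_exp (a * t / 4)]
    _ = _ := by
        rw [← div_div, Real.div_rpow (by positivity) ht.le, neg_add, Real.rpow_add ht,
          Real.rpow_neg ht.le, Real.rpow_neg_one, div_mul_eq_mul_div a 4]
        field_simp

lemma rpow_mul_heatTrace_bounded (hd : 0 ≤ d) (ha : 0 < a)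
    (hev : ∀ k : ℕ, a * (1 + k) ≤ ev k) {s : ℝ} (hs : d + 1 ≤ s) :
    ∃ M : ℝ, ∀ t : ℝ, 0 < t → t ^ s * heatTrace d ev t ≤ M := by
  set C := (2 * d / a) ^ d * (4 / a)
  have : 0 ≤ C := by positivity
  refine ⟨C * ((s - (d + 1)) / (a / 4)) ^ (s - (d + 1)), fun t ht ↦ ?_⟩
  calc t ^ s * heatTrace d ev t
      ≤ t ^ s * (C * (t ^ (-(d + 1)) * Real.exp (-(a / 4 * t)))) := by
        gcongr
        exact heatTrace_le hd ha hev ht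
    _ = C * (t ^ (s - (d + 1)) * Real.exp (-(a / 4 * t))) := by
        rw [sub_eq_add_neg, Real.rpow_add ht]
        ring
    _ ≤ C * ((s - (d + 1)) / (a / 4)) ^ (s - (d + 1)) := by
        gcongr
        exact rpow_mul_exp_neg_mul_le (sub_nonneg.2 hs) (by positivity) ht.le

-- The `N` terms with `N ≤ k < 2 * N` already have this order of magnitude.
lemma le_heatTrace_inv_natCast (hd : 0 ≤ d) (ha : 0 < a)
    (hlower : ∀ k : ℕ, a * (1 + k) ≤ ev k) (hupper : ∀ k : ℕ, ev k ≤ b * (1 + k))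
    {N : ℕ} (hN : 0 < N) :
    Real.exp (-(2 * b)) * (N : ℝ) ^ (d + 1) ≤ heatTrace d ev (N : ℝ)⁻¹ := by
  have hb : 0 ≤ b := by
    have h := (hlower 0).trans (hupper 0)
    rw [Nat.cast_zero, add_zero, mul_one, mul_one] at h
    exact ha.le.trans h
  have hterm : ∀ k ∈ Finset.Ico N (2 * N), (N : ℝ) ^ d * Real.exp (-(2 * b)) ≤
      (1 + (k : ℝ)) ^ d * Real.exp (-((N : ℝ)⁻¹ * ev k)) := by
    intro k hk
    obtain ⟨hNk, hkN⟩ := Finset.mem_Ico.1 hk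
    have hNk' : (N : ℝ) ≤ 1 + k := by exact_mod_cast (by lia : N ≤ 1 + k)
    have hkN' : 1 + (k : ℝ) ≤ 2 * N := by exact_mod_cast (by lia : 1 + k ≤ 2 * N)
    have hev : (N : ℝ)⁻¹ * ev k ≤ 2 * b := by
      rw [inv_mul_le_iff₀ (by positivity)]
      linarith [hupper k, mul_le_mul_of_nonneg_left hkN' hb]
    gcongr
  calc Real.exp (-(2 * b)) * (N : ℝ) ^ (d + 1)
      = (Finset.Ico N (2 * N)).card • ((N : ℝ) ^ d * Real.exp (-(2 * b))) := by
        rw [Nat.card_Ico, two_mul N, Nat.add_sub_cancel, nsmul_eq_mul,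
          Real.rpow_add_one (by positivity)]
        ring
    _ ≤ ∑ k ∈ Finset.Ico N (2 * N), (1 + (k : ℝ)) ^ d * Real.exp (-((N : ℝ)⁻¹ * ev k)) :=
        Finset.card_nsmul_le_sum _ _ _ hterm
    _ ≤ heatTrace d ev (N : ℝ)⁻¹ :=
        (summable_heatTrace hd ha hlower (by positivity)).sum_le_tsum _ fun _ _ ↦ by positivity

lemma le_of_rpow_mul_heatTrace_bounded (hd : 0 ≤ d) (ha : 0 < a)
    (hlower : ∀ k : ℕ, a * (1 + k) ≤ ev k) (hupper : ∀ k : ℕ, ev k ≤ b * (1 + k)) {s M : ℝ}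
    (hM : ∀ t : ℝ, 0 < t → t ^ s * heatTrace d ev t ≤ M) : d + 1 ≤ s := by
  by_contra! hs
  have hbound : ∀ N : ℕ, 0 < N → Real.exp (-(2 * b)) * (N : ℝ) ^ (d + 1 - s) ≤ M := by
    intro N hN
    have hN' : (0 : ℝ) < N := Nat.cast_pos.2 hN
    calc Real.exp (-(2 * b)) * (N : ℝ) ^ (d + 1 - s)
        = (N : ℝ)⁻¹ ^ s * (Real.exp (-(2 * b)) * (N : ℝ) ^ (d + 1)) := by
          rw [Real.rpow_sub hN', Real.inv_rpow hN'.le]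
          ring
      _ ≤ (N : ℝ)⁻¹ ^ s * heatTrace d ev (N : ℝ)⁻¹ := by
          gcongr
          exact le_heatTrace_inv_natCast hd ha hlower hupper hN
      _ ≤ M := hM _ (inv_pos.2 hN')
  have htendsto : Filter.Tendsto (fun N : ℕ ↦ Real.exp (-(2 * b)) * (N : ℝ) ^ (d + 1 - s))
      Filter.atTop Filter.atTop :=
    ((tendsto_rpow_atTop (sub_pos.2 hs)).comp tendsto_natCast_atTop_atTop).const_mul_atTop
      (Real.exp_pos _)
  obtain ⟨N, hN, hNM⟩ :=
    ((Filter.eventually_gt_atTop 0).and (htendsto.eventually_gt_atTop M)).exists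
  exact (hbound N hN).not_gt hNM

theorem rpow_mul_heatTrace_bounded_iff (hd : 0 ≤ d) (ha : 0 < a)
    (hlower : ∀ k : ℕ, a * (1 + k) ≤ ev k) (hupper : ∀ k : ℕ, ev k ≤ b * (1 + k)) {s : ℝ} :
    (∃ M : ℝ, ∀ t : ℝ, 0 < t → t ^ s * heatTrace d ev t ≤ M) ↔ d + 1 ≤ s :=
  ⟨fun ⟨_, hM⟩ ↦ le_of_rpow_mul_heatTrace_bounded hd ha hlower hupper hM,
    rpow_mul_heatTrace_bounded hd ha hlower⟩

end HeatTrace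

theorem sharp_sobolev_embedding_core_general (n : ℝ) (hn : 4 < n) (s : ℝ) :
    (∃ M : ℝ, ∀ t : ℝ, 0 < t →
      t ^ s * ∑' k : ℕ, (1 + (k : ℝ)) ^ 2 *
        Real.exp (-2 * t * (1 + heatEigenvalue n k)) ≤ M) ↔
    3 ≤ s := by
  have hx : 2 < √n := Real.lt_sqrt_of_sq_lt (by linarith)
  have : 0 < √n - 2 := sub_pos.2 hx
  set a := (√n * (√n + 2))⁻¹ with ha
  set b := (√n * (√n - 2))⁻¹ with hb
  have ha1 : a ≤ 1 := inv_le_one_of_one_le₀ (by nlinarith)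
  have hlower (k : ℕ) : 2 * a * (1 + k) ≤ 2 * (1 + heatEigenvalue n k) := by
    have h := div_le_heatEigenvalue hn k
    rw [div_eq_mul_inv, ← ha] at h
    linarith
  have hupper (k : ℕ) : 2 * (1 + heatEigenvalue n k) ≤ 2 * (1 + b) * (1 + k) := by
    have h := heatEigenvalue_le_div hn k
    rw [div_eq_mul_inv, ← hb] at h
    have hb0 : 0 ≤ b := by positivity
    linarith [k.cast_nonneg (α := ℝ)]
  have htrace (t : ℝ) : heatTrace 2 (fun k ↦ 2 * (1 + heatEigenvalue n k)) t =
      ∑' k : ℕ, (1 + (k : ℝ)) ^ 2 * Real.exp (-2 * t * (1 + heatEigenvalue n k)) :=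
    tsum_congr fun k ↦ by rw [Real.rpow_two]; ring_nf
  simp_rw [← htrace]
  rw [rpow_mul_heatTrace_bounded_iff two_pos.le (by positivity) hlower hupper]
  norm_num

/-- For `n ≥ 5` and the eigenvalues `c_k` of the heat semigroup generator on `Aut⁺(B)` with
`dim B = n`, one has `sup_{t>0} t^s ∑_{k=0}^∞ (1+k)² e^{−2t(1+c_k)} < ∞` if and only if
`s ≥ 3`: the analytic core of the sharpness of the Sobolev embedding for `Aut⁺(B)`. -/
theorem sharp_sobolev_embedding_core (n : ℝ) (hn : 5 ≤ n) (s : ℝ) :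
    (∃ M : ℝ, ∀ t : ℝ, 0 < t →
      t ^ s * ∑' k : ℕ, (1 + (k : ℝ)) ^ 2 *
        Real.exp (-2 * t * (1 + heatEigenvalue n k)) ≤ M) ↔
    3 ≤ s :=
  sharp_sobolev_embedding_core_general n (by linarith) s
end
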